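/- The calculus KBeq is sound and complete for threshold 1/2 with respect to the class of epistemic probability models: for every formula φ of L_KB, KBeq ⊢ φ if and only if φ is true at every world of every epistemic probability model under the probability semantics with threshold 1/2. -/

import Mathlib

open Classical

/-- An epistemic probability model: finite nonempty world set, S5 (equivalence)
accessibility relation, valuation, and a finitely additive probability measure
with full support. -/
structure EPM (W A : Type) where
  finite : Finite W
  nonempty : Nonempty W
  R : W → W → Prop
  equiv : Equivalence R
  V : W → Set A
  P : Set W → ℝ
  nonneg : ∀ X : Set W, 0 ≤ P X
  le_one : ∀ X : Set W, P X ≤ 1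
  norm : P Set.univ = 1
  add : ∀ X Y : Set W, X ∩ Y = ∅ → P (X ∪ Y) = P X + P Y
  full : ∀ w : W, 0 < P {w}

/-- The equivalence class `[w]` of a world. -/
def EPM.cl {W A : Type} (M : EPM W A) (w : W) : Set W := {v | M.R w v}

/-- `P_w(X) := P(X ∩ [w]) / P([w])`. -/
noncomputable def EPM.Pw {W A : Type} (M : EPM W A) (w : W) (X : Set W) : ℝ :=
  M.P (X ∩ M.cl w) / M.P (M.cl w)

/-- The language `L_KB`: `φ ::= ⊤ | p | ¬φ | φ∧φ | Kφ | Bφ`. -/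
inductive Form (A : Type) : Type where
  | top : Form A
  | atom : A → Form A
  | neg : Form A → Form A
  | and : Form A → Form A → Form A
  | K : Form A → Form A
  | B : Form A → Form A

namespace Form

/-- Material implication abbreviation. -/
def imp {A : Type} (φ ψ : Form A) : Form A := Form.neg (Form.and φ (Form.neg ψ))

/-- Disjunction abbreviation. -/
def or {A : Type} (φ ψ : Form A) : Form A := Form.neg (Form.and (Form.neg φ) (Form.neg ψ))

/-- Falsehood `⊥ := ¬⊤`. -/
def bot {A : Type} : Form A := Form.neg Form.top

/-- Biconditional abbreviation. -/
def iff {A : Type} (φ ψ : Form A) : Form A := Form.and (Form.imp φ ψ) (Form.imp ψ φ)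

end Form

/-- Truth set of a formula in an epistemic probability model, for threshold `c`:
`Kφ` holds at `w` iff `P_w(⟦φ⟧) = 1`, and `Bφ` holds at `w` iff `P_w(⟦φ⟧) > c`. -/
noncomputable def psem {W A : Type} (c : ℝ) (M : EPM W A) : Form A → Set W
  | Form.top => Set.univ
  | Form.atom p => {w | p ∈ M.V w}
  | Form.neg φ => (psem c M φ)ᶜ
  | Form.and φ ψ => psem c M φ ∩ psem c M ψ
  | Form.K φ => {w | M.Pw w (psem c M φ) = 1}
  | Form.B φ => {w | c < M.Pw w (psem c M φ)}

/-- Boolean evaluation of a formula under a valuation of "atomic" formulas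
(propositional letters and formulas of the form `Kφ` or `Bφ`). -/
def evalb {A : Type} (v : Form A → Bool) : Form A → Bool
  | Form.top => true
  | Form.atom p => v (Form.atom p)
  | Form.neg φ => !(evalb v φ)
  | Form.and φ ψ => evalb v φ && evalb v ψ
  | Form.K φ => v (Form.K φ)
  | Form.B φ => v (Form.B φ)

/-- `φ` is a propositional tautology (treating `Kψ` and `Bψ` as atoms). -/
def Taut {A : Type} (φ : Form A) : Prop := ∀ v : Form A → Bool, evalb v φ = true

/-- The Hilbert calculus `KB`. -/
inductive KB {A : Type} : Form A → Prop where
  | taut {φ : Form A} : Taut φ → KB φ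
  | kdist (φ ψ : Form A) :
      KB (Form.imp (Form.K (Form.imp φ ψ)) (Form.imp (Form.K φ) (Form.K ψ)))
  | kt (φ : Form A) : KB (Form.imp (Form.K φ) φ)
  | k4 (φ : Form A) : KB (Form.imp (Form.K φ) (Form.K (Form.K φ)))
  | k5 (φ : Form A) : KB (Form.imp (Form.neg (Form.K φ)) (Form.K (Form.neg (Form.K φ))))
  | bf : KB (Form.neg (Form.B (Form.bot)))
  | bn : KB (Form.B Form.top)
  | ap (φ : Form A) : KB (Form.imp (Form.B φ) (Form.K (Form.B φ)))
  | an (φ : Form A) : KB (Form.imp (Form.neg (Form.B φ)) (Form.K (Form.neg (Form.B φ))))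
  | kbm (φ ψ : Form A) :
      KB (Form.imp (Form.K (Form.imp φ ψ)) (Form.imp (Form.B φ) (Form.B ψ)))
  | mp {φ ψ : Form A} : KB (Form.imp φ ψ) → KB φ → KB ψ
  | nec {φ : Form A} : KB φ → KB (Form.K φ)

/-- Conjunction of a list of formulas. -/
def bigAnd {A : Type} : List (Form A) → Form A
  | [] => Form.top
  | φ :: l => Form.and φ (bigAnd l)

/-- Disjunction of a list of formulas. -/
def bigOr {A : Type} : List (Form A) → Form A
  | [] => Form.bot
  | φ :: l => Form.or φ (bigOr l)

/-- The conjunction `d_1φ_1∧…∧d_nφ_n∧e_1ψ_1∧…∧e_nψ_n` where `d_i` is the empty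
string iff `i ∈ D` and `e_i` is the empty string iff `i ∈ E` (otherwise `¬`). -/
def conjDE {A : Type} {n : ℕ} (φ ψ : Fin n → Form A) (D E : Finset (Fin n)) : Form A :=
  bigAnd (List.ofFn (fun i => if i ∈ D then φ i else Form.neg (φ i)) ++
          List.ofFn (fun i => if i ∈ E then ψ i else Form.neg (ψ i)))

/-- The formula `F_k`: the disjunction of all the conjunctions in which exactly
`k` of the `d_i` are the empty string and at least `k` of the `e_i` are. -/
noncomputable def segF {A : Type} {n : ℕ} (φ ψ : Fin n → Form A) (k : ℕ) : Form A :=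
  bigOr ((((Finset.univ : Finset (Finset (Fin n) × Finset (Fin n))).filter
      (fun DE => DE.1.card = k ∧ k ≤ DE.2.card)).toList).map
      (fun DE => conjDE φ ψ DE.1 DE.2))

/-- Segerberg's notation `(φ_1,…,φ_n 𝕀 ψ_1,…,ψ_n) := K(F_0 ∨ ⋯ ∨ F_n)`. -/
noncomputable def segI {A : Type} {n : ℕ} (φ ψ : Fin n → Form A) : Form A :=
  Form.K (bigOr ((List.range (n + 1)).map (segF φ ψ)))

/-- The Hilbert calculus `KBeq`, extending `KB` with (D), (SC) and (Scott). -/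
inductive KBeq {A : Type} : Form A → Prop where
  | taut {φ : Form A} : Taut φ → KBeq φ
  | kdist (φ ψ : Form A) :
      KBeq (Form.imp (Form.K (Form.imp φ ψ)) (Form.imp (Form.K φ) (Form.K ψ)))
  | kt (φ : Form A) : KBeq (Form.imp (Form.K φ) φ)
  | k4 (φ : Form A) : KBeq (Form.imp (Form.K φ) (Form.K (Form.K φ)))
  | k5 (φ : Form A) : KBeq (Form.imp (Form.neg (Form.K φ)) (Form.K (Form.neg (Form.K φ))))
  | bf : KBeq (Form.neg (Form.B (Form.bot)))
  | bn : KBeq (Form.B Form.top)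
  | ap (φ : Form A) : KBeq (Form.imp (Form.B φ) (Form.K (Form.B φ)))
  | an (φ : Form A) : KBeq (Form.imp (Form.neg (Form.B φ)) (Form.K (Form.neg (Form.B φ))))
  | kbm (φ ψ : Form A) :
      KBeq (Form.imp (Form.K (Form.imp φ ψ)) (Form.imp (Form.B φ) (Form.B ψ)))
  | dax (φ : Form A) : KBeq (Form.imp (Form.B φ) (Form.neg (Form.B (Form.neg φ))))
  | scax (φ ψ : Form A) :
      KBeq (Form.imp
        (Form.and (Form.neg (Form.B (Form.neg φ)))
          (Form.neg (Form.K (Form.neg (Form.and (Form.neg φ) ψ)))))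
        (Form.B (Form.or φ ψ)))
  | scott (m : ℕ) (φ ψ : Fin (m + 1) → Form A) :
      KBeq (Form.imp
        (Form.and (segI φ ψ)
          (Form.and (Form.B (φ 0))
            (bigAnd (List.ofFn (fun i : Fin m => Form.neg (Form.B (Form.neg (φ i.succ))))))))
        (bigOr (List.ofFn (fun i : Fin (m + 1) => Form.B (ψ i)))))
  | mp {φ ψ : Form A} : KBeq (Form.imp φ ψ) → KBeq φ → KBeq ψ
  | nec {φ : Form A} : KBeq φ → KBeq (Form.K φ)

/-! ### Farkas lemma -/

theorem farkas_aux {V ι : Type} [AddCommGroup V] [Module ℚ V] (s : Finset ι) :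
    ∀ (a : ι → V →ₗ[ℚ] ℚ) (b : V →ₗ[ℚ] ℚ),
      (∀ x, (∀ i ∈ s, 0 ≤ a i x) → 0 ≤ b x) →
      ∃ l : ι → ℚ, (∀ i, 0 ≤ l i) ∧ ∀ x, b x = ∑ i ∈ s, l i * a i x := by
  induction s using Finset.induction_on with
  | empty =>
    intro a b h
    refine ⟨fun _ => 0, fun _ => le_rfl, fun x => ?_⟩
    have h1 := h x (by simp)
    have h2 := h (-x) (by simp)
    simp at h2 ⊢
    linarith
  | insert j s hj ih =>
    intro a b h
    by_cases hb : ∀ x, (∀ i ∈ s, 0 ≤ a i x) → 0 ≤ b x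
    · obtain ⟨l, hl, e⟩ := ih a b hb
      refine ⟨fun i => if i = j then 0 else l i, fun i => ?_, fun x => ?_⟩
      · dsimp only
        split_ifs
        · exact le_rfl
        · exact hl i
      · rw [Finset.sum_insert hj, e x]
        simp only [if_true, zero_mul, zero_add]
        refine Finset.sum_congr rfl fun i hi => ?_
        rw [if_neg (fun hh : i = j => hj (hh ▸ hi))]
    · push Not at hb
      obtain ⟨x0, hx0, hbx⟩ := hb
      have hc : a j x0 < 0 := by
        by_contra hcon
        push Not at hcon
        have := h x0 (by
          intro i hi
          rcases Finset.mem_insert.1 hi with rfl | hi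
          · exact hcon
          · exact hx0 i hi)
        linarith
      set c := a j x0 with hcdef
      have key : ∀ x, (∀ i ∈ s, 0 ≤ (a i - (a i x0 / c) • a j) x) →
          0 ≤ (b - (b x0 / c) • a j) x := by
        intro x hx
        have := h (x - (a j x / c) • x0) (by
          intro i hi
          rcases Finset.mem_insert.1 hi with rfl | hi
          · simp only [map_sub, map_smul, smul_eq_mul, ← hcdef]
            have : a i x - a i x / c * c = 0 := by rw [div_mul_cancel₀ _ hc.ne, sub_self]
            rw [this]
          · have := hx i hi
            simp only [map_sub, map_smul, smul_eq_mul, LinearMap.sub_apply,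
              LinearMap.smul_apply] at this ⊢
            convert this using 1
            ring)
        simp only [map_sub, map_smul, smul_eq_mul, LinearMap.sub_apply,
              LinearMap.smul_apply] at this ⊢
        convert this using 1
        ring
      obtain ⟨l, hl, e⟩ := ih _ _ key
      have hpos : 0 ≤ b x0 / c - ∑ i ∈ s, l i * (a i x0 / c) := by
        have h1 : 0 < b x0 / c := div_pos_of_neg_of_neg hbx hc
        have h2 : ∑ i ∈ s, l i * (a i x0 / c) ≤ 0 := by
          refine Finset.sum_nonpos fun i hi => ?_
          exact mul_nonpos_of_nonneg_of_nonpos (hl i)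
            (div_nonpos_of_nonneg_of_nonpos (hx0 i hi) hc.le)
        linarith
      refine ⟨fun i => if i = j then b x0 / c - ∑ i ∈ s, l i * (a i x0 / c) else l i,
        fun i => ?_, fun x => ?_⟩
      · dsimp only
        split_ifs
        · exact hpos
        · exact hl i
      · rw [Finset.sum_insert hj]
        have e2 : ∑ i ∈ s, (if i = j then b x0 / c - ∑ i ∈ s, l i * (a i x0 / c) else l i)
            * a i x = ∑ i ∈ s, l i * a i x :=
          Finset.sum_congr rfl fun i hi => by rw [if_neg (fun hh : i = j => hj (hh ▸ hi))]
        rw [e2]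
        simp only [if_true]
        have := e x
        simp only [smul_eq_mul, LinearMap.sub_apply,
              LinearMap.smul_apply, mul_sub, Finset.sum_sub_distrib] at this
        rw [sub_mul, Finset.sum_mul]
        have e3 : ∑ i ∈ s, l i * (a i x0 / c * a j x) = ∑ i ∈ s, l i * (a i x0 / c) * a j x :=
          Finset.sum_congr rfl fun i _ => by ring
        linarith

theorem clear_den {ι : Type} [Fintype ι] (l : ι → ℚ) (hl : ∀ i, 0 ≤ l i) :
    ∃ (D : ℕ) (n : ι → ℕ), 0 < D ∧ ∀ i, (n i : ℚ) = D * l i := by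
  refine ⟨∏ i, (l i).den, fun i => (∏ j ∈ Finset.univ.erase i, (l j).den) * (l i).num.toNat,
    Finset.prod_pos fun i _ => (l i).den_pos, fun i => ?_⟩
  rw [← Finset.mul_prod_erase Finset.univ _ (Finset.mem_univ i)]
  have h1 : (((l i).num.toNat : ℕ) : ℚ) = (l i).num := by
    have : (((l i).num.toNat : ℕ) : ℤ) = (l i).num := Int.toNat_of_nonneg (Rat.num_nonneg.2 (hl i))
    exact_mod_cast this
  have h2 : ((l i).den : ℚ) * l i = (l i).num := Rat.den_mul_eq_num (l i)
  push_cast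
  rw [h1, ← h2]
  ring

/-- sign vector of a set -/
noncomputable def sgv {W : Type} (X : Set W) (w : W) : ℤ := if w ∈ X then 1 else -1

/-- The Scott condition, for a list given by multiplicities. -/
theorem scott_mult {W : Type} [Finite W] (N : Set W → Prop)
    (hD : ∀ X, N X → ¬ N Xᶜ)
    (hScott : ∀ (m : ℕ) (X Y : Fin (m + 1) → Set W),
      (∀ w, (Finset.univ.filter fun i => w ∈ X i).card
          ≤ (Finset.univ.filter fun i => w ∈ Y i).card) →
      N (X 0) → (∀ i : Fin m, ¬ N (X i.succ)ᶜ) → ∃ i, N (Y i))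
    {ι : Type} [Fintype ι] (Z : ι → Set W) (hZ : ∀ i, ¬ N (Z i)ᶜ) (n : ι → ℕ)
    (Y : Set W) (hY : N Y) (h : ∀ w, sgv Y w + ∑ i, (n i : ℤ) * sgv (Z i) w ≤ 0) : False := by
  let e := (Fintype.equivFin (Σ i, Fin (n i))).symm
  let X : Fin (Fintype.card (Σ i, Fin (n i)) + 1) → Set W := Fin.cons Y fun k => Z (e k).1
  have hs : ∀ w, ∑ k, sgv (X k) w ≤ 0 := by
    intro w
    have : ∑ k, sgv (X k) w = sgv Y w + ∑ i, (n i : ℤ) * sgv (Z i) w := by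
      rw [Fin.sum_univ_succ]
      simp only [X, Fin.cons_zero, Fin.cons_succ]
      rw [Equiv.sum_comp e (fun j => sgv (Z j.1) w), Fintype.sum_sigma]
      simp
    rw [this]
    exact h w
  obtain ⟨Y', hY'⟩ : ∃ Y' : Fin (Fintype.card (Σ i, Fin (n i)) + 1) → Set W,
      ∀ k, Y' k = (X k)ᶜ := ⟨_, fun _ => rfl⟩
  obtain ⟨i, hi⟩ := hScott _ X Y' (by
      intro w
      have h1 := hs w
      have h2 : ∑ k, sgv (X k) w = ((Finset.univ.filter fun k => w ∈ X k).card : ℤ)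
          - ((Finset.univ.filter fun k => w ∈ Y' k).card : ℤ) := by
        rw [Finset.card_filter, Finset.card_filter]
        push_cast
        rw [← Finset.sum_sub_distrib]
        refine Finset.sum_congr rfl fun k _ => ?_
        by_cases hk : w ∈ X k <;> simp [sgv, hk, hY']
      omega) (by simpa [X] using hY) (by intro i; simpa [X] using hZ _)
  refine Fin.cases ?_ (fun k => ?_) i hi
  · intro h0
    exact hD Y hY (by simpa [X, hY'] using h0)
  · intro h0
    exact hZ _ (by simpa [X, hY'] using h0)

theorem exists_prob {W : Type} [Fintype W] (N : Set W → Prop)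
    (hD : ∀ X, N X → ¬ N Xᶜ)
    (hSC : ∀ X x, ¬ N Xᶜ → x ∉ X → N (insert x X))
    (hScott : ∀ (m : ℕ) (X Y : Fin (m + 1) → Set W),
      (∀ w, (Finset.univ.filter fun i => w ∈ X i).card
          ≤ (Finset.univ.filter fun i => w ∈ Y i).card) →
      N (X 0) → (∀ i : Fin m, ¬ N (X i.succ)ᶜ) → ∃ i, N (Y i)) :
    ∃ p : W → ℚ, (∀ w, 0 < p w) ∧ ∀ X, N X ↔ 0 < ∑ w, (sgv X w : ℚ) * p w := by
  let ι := {X : Set W // ¬ N Xᶜ} ⊕ W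
  let vec : ι → W → ℤ := fun i => Sum.elim (fun X w => sgv X.1 w)
    (fun w w' => if w' = w then 1 else 0) i
  let a : ι → (W → ℚ) →ₗ[ℚ] ℚ := fun i => ∑ w, (vec i w : ℚ) • LinearMap.proj w
  have ha : ∀ i p, a i p = ∑ w, (vec i w : ℚ) * p w := by
    intro i p
    simp [a, LinearMap.sum_apply]
  have hav : ∀ i w, a i (Pi.single w 1) = (vec i w : ℚ) := by
    intro i w
    rw [ha]
    simp [Pi.single_apply]
  let strict : ι → Prop := fun i => Sum.elim (fun X => N X.1) (fun _ => True) i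
  have main : ∀ j, strict j → ∃ p : W → ℚ, (∀ i, 0 ≤ a i p) ∧ 0 < a j p := by
    intro j hj
    by_contra hcon
    push Not at hcon
    obtain ⟨l, hl, e⟩ := farkas_aux Finset.univ a (-a j) (by
      intro x hx
      have := hcon x (fun i => hx i (Finset.mem_univ i))
      simpa using this)
    obtain ⟨D, n, hDpos, hn⟩ := clear_den l hl
    -- integer relation
    have hrel : ∀ w, (D : ℤ) * vec j w + ∑ i, (n i : ℤ) * vec i w = 0 := by
      intro w
      have := e (Pi.single w 1)
      simp only [LinearMap.neg_apply, hav] at this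
      have h2 : (D : ℚ) * vec j w + ∑ i, (n i : ℚ) * vec i w = 0 := by
        have h3 : ∑ i, (n i : ℚ) * vec i w = D * ∑ i, l i * vec i w := by
          rw [Finset.mul_sum]
          refine Finset.sum_congr rfl fun i _ => ?_
          rw [hn]
          ring
        rw [h3, ← this]
        ring
      exact_mod_cast h2
    have hsplit : ∀ w, (D : ℤ) * vec j w + ∑ X : {X : Set W // ¬ N Xᶜ},
        (n (Sum.inl X) : ℤ) * sgv X.1 w + n (Sum.inr w) = 0 := by
      intro w
      have := hrel w
      rw [Fintype.sum_sum_type] at this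
      simp only [vec, Sum.elim_inl, Sum.elim_inr] at this
      simp at this
      simp only [vec]
      linarith
    rcases j with X0 | w0
    · refine scott_mult N hD hScott (fun X : {X : Set W // ¬ N Xᶜ} => X.1) (fun X => X.2)
        (fun X => n (Sum.inl X) + if X = X0 then D - 1 else 0) X0.1 hj ?_
      intro w
      have := hsplit w
      simp only [vec, Sum.elim_inl] at this
      have e1 : ∑ X : {X : Set W // ¬ N Xᶜ}, ((n (Sum.inl X) + (if X = X0 then D - 1 else 0 : ℕ) : ℕ) : ℤ) * sgv X.1 w
          = ∑ X : {X : Set W // ¬ N Xᶜ}, (n (Sum.inl X) : ℤ) * sgv X.1 w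
            + ((D - 1 : ℕ) : ℤ) * sgv X0.1 w := by
        push_cast
        simp [add_mul, Finset.sum_add_distrib]
      rw [e1, Nat.cast_sub (by omega)]
      push_cast
      have : 0 ≤ (n (Sum.inr w) : ℤ) := by positivity
      linarith
    · have hex : ∃ X0 : {X : Set W // ¬ N Xᶜ}, w0 ∉ X0.1 ∧ 0 < n (Sum.inl X0) := by
        by_contra hno
        push Not at hno
        have := hsplit w0
        simp only [vec, Sum.elim_inr, if_true] at this
        have h0 : 0 ≤ ∑ X : {X : Set W // ¬ N Xᶜ}, (n (Sum.inl X) : ℤ) * sgv X.1 w0 := by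
          refine Finset.sum_nonneg fun X _ => ?_
          by_cases hX : w0 ∈ X.1
          · simp [sgv, hX]
          · have := hno X hX
            have : n (Sum.inl X) = 0 := by omega
            simp [this]
        have : 0 ≤ (n (Sum.inr w0) : ℤ) := by positivity
        have : (0 : ℤ) < D := by exact_mod_cast hDpos
        linarith
      obtain ⟨X0, hw0, hn0⟩ := hex
      refine scott_mult N hD hScott (fun X : {X : Set W // ¬ N Xᶜ} => X.1) (fun X => X.2)
        (fun X => 2 * n (Sum.inl X) - if X = X0 then 1 else 0) (insert w0 X0.1)
        (hSC _ _ X0.2 hw0) ?_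
      intro w
      have := hsplit w
      simp only [vec, Sum.elim_inr] at this
      have e1 : ∑ X : {X : Set W // ¬ N Xᶜ}, ((2 * n (Sum.inl X) - (if X = X0 then 1 else 0 : ℕ) : ℕ) : ℤ) * sgv X.1 w
          = 2 * ∑ X : {X : Set W // ¬ N Xᶜ}, (n (Sum.inl X) : ℤ) * sgv X.1 w
            - sgv X0.1 w := by
        have e2 : ∀ X : {X : Set W // ¬ N Xᶜ}, ((2 * n (Sum.inl X) - (if X = X0 then 1 else 0 : ℕ) : ℕ) : ℤ) * sgv X.1 w
          = 2 * ((n (Sum.inl X) : ℤ) * sgv X.1 w) - (if X = X0 then sgv X.1 w else 0) := by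
          intro X
          by_cases hX : X = X0
          · subst hX
            rw [if_pos rfl, if_pos rfl, Nat.cast_sub (by omega)]
            push_cast
            ring
          · rw [if_neg hX, if_neg hX, Nat.sub_zero]
            push_cast
            ring
        simp only [e2, Finset.sum_sub_distrib, ← Finset.mul_sum]
        simp
      rw [e1]
      have hnn : 0 ≤ (n (Sum.inr w) : ℤ) := by positivity
      by_cases hw : w = w0
      · subst hw
        simp only [if_true] at this
        have : (0 : ℤ) < D := by exact_mod_cast hDpos
        simp only [sgv, Set.mem_insert_iff, true_or, if_true, hw0, if_false]
        simp only [sgv] at *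
        linarith
      · simp only [if_neg hw] at this
        have e3 : sgv (insert w0 X0.1) w = sgv X0.1 w := by simp [sgv, hw]
        rw [e3]
        linarith
  choose! p hp using main
  let q : W → ℚ := ∑ j ∈ Finset.univ.filter strict, p j
  have hq0 : ∀ i, 0 ≤ a i q := by
    intro i
    simp only [q, map_sum]
    exact Finset.sum_nonneg fun j hj => (hp j (Finset.mem_filter.1 hj).2).1 i
  have hq1 : ∀ i, strict i → 0 < a i q := by
    intro i hi
    simp only [q, map_sum]
    exact Finset.sum_pos' (fun j hj => (hp j (Finset.mem_filter.1 hj).2).1 i)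
      ⟨i, by simp [hi], (hp i hi).2⟩
  refine ⟨q, fun w => ?_, fun X => ⟨fun h => ?_, fun h => ?_⟩⟩
  · have := hq1 (Sum.inr w) trivial
    rw [ha] at this
    simpa [vec] using this
  · have := hq1 (Sum.inl ⟨X, hD X h⟩) h
    rw [ha] at this
    simpa [vec] using this
  · by_contra hN
    have := hq0 (Sum.inl ⟨Xᶜ, by simpa using hN⟩)
    rw [ha] at this
    simp only [vec, Sum.elim_inl] at this
    have e1 : ∑ w, (sgv Xᶜ w : ℚ) * q w = - ∑ w, (sgv X w : ℚ) * q w := by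
      rw [← Finset.sum_neg_distrib]
      refine Finset.sum_congr rfl fun w _ => ?_
      by_cases hw : w ∈ X <;> simp [sgv, hw]
    linarith

/-! ### Boolean evaluators -/

/-- A truth predicate which respects the Boolean connectives. -/
structure BH {A : Type} (T : Form A → Prop) : Prop where
  top : T Form.top
  neg : ∀ φ, T (Form.neg φ) ↔ ¬ T φ
  and : ∀ φ ψ, T (Form.and φ ψ) ↔ T φ ∧ T ψ

namespace BH

variable {A : Type} {T : Form A → Prop}

theorem imp (h : BH T) (φ ψ : Form A) : T (Form.imp φ ψ) ↔ (T φ → T ψ) := by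
  simp only [Form.imp, h.neg, h.and]
  tauto

theorem or (h : BH T) (φ ψ : Form A) : T (Form.or φ ψ) ↔ (T φ ∨ T ψ) := by
  simp only [Form.or, h.neg, h.and]
  tauto

theorem bot (h : BH T) : ¬ T (Form.bot) := by
  simp only [Form.bot, h.neg, h.top, not_true, not_false_iff]

theorem bigAnd (h : BH T) (l : List (Form A)) : T (bigAnd l) ↔ ∀ x ∈ l, T x := by
  induction l with
  | nil => simp [_root_.bigAnd, h.top]
  | cons x l ih => simp [_root_.bigAnd, h.and, ih]

theorem bigOr (h : BH T) (l : List (Form A)) : T (bigOr l) ↔ ∃ x ∈ l, T x := by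
  induction l with
  | nil => simp [_root_.bigOr, h.bot]
  | cons x l ih => simp [_root_.bigOr, h.or, ih]

theorem taut (h : BH T) {φ : Form A} (ht : Taut φ) : T φ := by
  have key : ∀ χ : Form A, evalb (fun x => decide (T x)) χ = true ↔ T χ := by
    intro χ
    induction χ with
    | top => simp [evalb, h.top]
    | atom p => simp [evalb]
    | neg φ ih => rw [h.neg, ← ih]; simp [evalb]
    | and φ ψ ih1 ih2 => rw [h.and, ← ih1, ← ih2]; simp [evalb]
    | K φ _ => simp [evalb]
    | B φ _ => simp [evalb]
  exact (key φ).1 (ht _)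

theorem conjDE (h : BH T) {n : ℕ} (φ ψ : Fin n → Form A) (D E : Finset (Fin n)) :
    T (conjDE φ ψ D E) ↔ (∀ i, i ∈ D ↔ T (φ i)) ∧ (∀ i, i ∈ E ↔ T (ψ i)) := by
  have aux : ∀ (χ : Fin n → Form A) (S : Finset (Fin n)) (i : Fin n),
      T (if i ∈ S then χ i else Form.neg (χ i)) ↔ (i ∈ S ↔ T (χ i)) := by
    intro χ S i
    split_ifs with hi
    · simp [hi]
    · simp [hi, h.neg]
  unfold _root_.conjDE
  rw [h.bigAnd]
  simp only [List.mem_append, List.mem_ofFn]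
  constructor
  · intro H
    exact ⟨fun i => (aux φ D i).1 (H _ (Or.inl ⟨i, rfl⟩)),
      fun i => (aux ψ E i).1 (H _ (Or.inr ⟨i, rfl⟩))⟩
  · rintro ⟨H1, H2⟩ x (⟨i, rfl⟩ | ⟨i, rfl⟩)
    · exact (aux φ D i).2 (H1 i)
    · exact (aux ψ E i).2 (H2 i)

theorem segI (h : BH T) {n : ℕ} (φ ψ : Fin n → Form A) :
    T (_root_.bigOr ((List.range (n + 1)).map (segF φ ψ))) ↔
      (Finset.univ.filter fun i => T (φ i)).card ≤ (Finset.univ.filter fun i => T (ψ i)).card := by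
  rw [h.bigOr]
  constructor
  · rintro ⟨x, hx, hT⟩
    obtain ⟨k, -, rfl⟩ := List.mem_map.1 hx
    unfold segF at hT
    rw [h.bigOr] at hT
    obtain ⟨y, hy, hT⟩ := hT
    obtain ⟨⟨D, E⟩, hDE, rfl⟩ := List.mem_map.1 hy
    rw [Finset.mem_toList, Finset.mem_filter] at hDE
    obtain ⟨-, h1, h2⟩ := hDE
    rw [h.conjDE] at hT
    have e1 : (Finset.univ.filter fun i => T (φ i)) = D := by ext i; simp [hT.1 i]
    have e2 : (Finset.univ.filter fun i => T (ψ i)) = E := by ext i; simp [hT.2 i]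
    rw [e1, e2]
    simp only at h1 h2
    omega
  · intro H
    refine ⟨_, List.mem_map.2 ⟨(Finset.univ.filter fun i => T (φ i)).card, ?_, rfl⟩, ?_⟩
    · rw [List.mem_range]
      have := Finset.card_le_univ (Finset.univ.filter fun i => T (φ i))
      simp only [Fintype.card_fin] at this
      omega
    · unfold segF
      rw [h.bigOr]
      refine ⟨_, List.mem_map.2 ⟨(Finset.univ.filter fun i => T (φ i),
        Finset.univ.filter fun i => T (ψ i)), ?_, rfl⟩, ?_⟩
      · rw [Finset.mem_toList, Finset.mem_filter]
        exact ⟨Finset.mem_univ _, rfl, H⟩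
      · rw [h.conjDE]
        simp

end BH

/-! ### Soundness -/

theorem EPM.P_empty {W A : Type} (M : EPM W A) : M.P ∅ = 0 := by
  have := M.add ∅ ∅ (by simp)
  simp at this
  exact this

theorem EPM.P_sum {W A : Type} (M : EPM W A) (s : Finset W) :
    M.P (s : Set W) = ∑ v ∈ s, M.P {v} := by
  induction s using Finset.induction_on with
  | empty => simp [M.P_empty]
  | insert a s ha ih =>
    rw [Finset.sum_insert ha, Finset.coe_insert, Set.insert_eq, M.add, ih]
    ext x
    simp only [Set.mem_inter_iff, Set.mem_singleton_iff, Finset.mem_coe, Set.mem_empty_iff_false,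
      iff_false, not_and]
    rintro rfl
    exact ha

theorem EPM.Pw_weights {W A : Type} [Fintype W] (M : EPM W A) (w : W) :
    ∃ q : W → ℝ, (∀ v, 0 ≤ q v) ∧ (∀ v, M.R w v ↔ 0 < q v) ∧ ∑ v, q v = 1 ∧
      ∀ X, M.Pw w X = ∑ v, if v ∈ X then q v else 0 := by
  have hsum : ∀ X : Set W, M.P X = ∑ v, if v ∈ X then M.P {v} else 0 := by
    intro X
    have := M.P_sum (Finset.univ.filter fun v => v ∈ X)
    rw [Finset.sum_filter] at this
    rw [← this]
    congr 1
    ext v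
    simp
  have hcl : 0 < M.P (M.cl w) := by
    rw [hsum]
    refine Finset.sum_pos' (fun v _ => ?_) ⟨w, Finset.mem_univ _, ?_⟩
    · split_ifs
      · exact M.nonneg _
      · exact le_rfl
    · rw [if_pos (show w ∈ M.cl w from M.equiv.refl w)]
      exact M.full w
  have hform : ∀ X, M.Pw w X =
      ∑ v, if v ∈ X then (if M.R w v then M.P {v} / M.P (M.cl w) else 0) else 0 := by
    intro X
    unfold EPM.Pw
    rw [hsum (X ∩ M.cl w), Finset.sum_div]
    refine Finset.sum_congr rfl fun v _ => ?_
    by_cases h1 : v ∈ X <;> by_cases h2 : M.R w v <;> simp [EPM.cl, h1, h2]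
  refine ⟨fun v => if M.R w v then M.P {v} / M.P (M.cl w) else 0, fun v => ?_, fun v => ?_, ?_,
    hform⟩
  · dsimp only
    split_ifs
    · exact div_nonneg (M.nonneg _) hcl.le
    · exact le_rfl
  · dsimp only
    split_ifs with h
    · simp only [h, true_iff]
      exact div_pos (M.full v) hcl
    · simp [h]
  · have := hform Set.univ
    simp only [Set.mem_univ, if_true] at this
    rw [← this]
    unfold EPM.Pw
    rw [Set.univ_inter]
    exact div_self hcl.ne'

theorem EPM.Pw_congr {W A : Type} (M : EPM W A) {w v : W} (h : M.R w v) : M.Pw w = M.Pw v := by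
  have : M.cl w = M.cl v := by
    ext u
    exact ⟨fun hu => M.equiv.trans (M.equiv.symm h) hu, fun hu => M.equiv.trans h hu⟩
  funext X
  unfold EPM.Pw
  rw [this]

theorem psem_BH {W A : Type} (c : ℝ) (M : EPM W A) (w : W) :
    BH (fun φ : Form A => w ∈ psem c M φ) where
  top := by simp [psem]
  neg := by intro φ; simp [psem]
  and := by intro φ ψ; simp [psem]

theorem psem_K {W A : Type} (c : ℝ) (M : EPM W A) (w : W) (φ : Form A) :
    w ∈ psem c M (Form.K φ) ↔ ∀ v, M.R w v → v ∈ psem c M φ := by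
  have := M.finite
  have := Fintype.ofFinite W
  obtain ⟨q, h0, h1, h2, h3⟩ := M.Pw_weights w
  simp only [psem, Set.mem_ofPred_eq]
  rw [h3, ← h2]
  have key := Finset.sum_eq_sum_iff_of_le (s := Finset.univ)
    (f := fun v => if v ∈ psem c M φ then q v else 0) (g := q) (by
      intro v _
      split_ifs
      · exact le_rfl
      · exact h0 v)
  rw [key]
  constructor
  · intro H v hv
    by_contra hc
    have := H v (Finset.mem_univ _)
    rw [if_neg hc] at this
    have := (h1 v).1 hv
    linarith
  · intro H v _
    split_ifs with h
    · rfl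
    · by_contra hc
      exact h (H v ((h1 v).2 (lt_of_le_of_ne (h0 v) hc)))

theorem psem_BR {W A : Type} (c : ℝ) (M : EPM W A) {w v : W} (h : M.R w v) (φ : Form A) :
    w ∈ psem c M (Form.B φ) ↔ v ∈ psem c M (Form.B φ) := by
  simp only [psem, Set.mem_ofPred_eq, M.Pw_congr h]

theorem soundness {A : Type} {φ : Form A} (h : KBeq φ) :
    ∀ (W : Type) (M : EPM W A) (w : W), w ∈ psem (1/2 : ℝ) M φ := by
  intro W M
  have := M.finite
  have := Fintype.ofFinite W
  have I : ∀ (w : W) (φ ψ : Form A), w ∈ psem (1/2 : ℝ) M (Form.imp φ ψ) ↔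
    (w ∈ psem (1/2 : ℝ) M φ → w ∈ psem (1/2 : ℝ) M ψ) := fun w => (psem_BH (1/2) M w).imp
  have Ng : ∀ (w : W) (φ : Form A), w ∈ psem (1/2 : ℝ) M (Form.neg φ) ↔
    ¬ (w ∈ psem (1/2 : ℝ) M φ) := fun w => (psem_BH (1/2) M w).neg
  have An : ∀ (w : W) (φ ψ : Form A), w ∈ psem (1/2 : ℝ) M (Form.and φ ψ) ↔
    (w ∈ psem (1/2 : ℝ) M φ ∧ w ∈ psem (1/2 : ℝ) M ψ) := fun w => (psem_BH (1/2) M w).and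
  have Or' : ∀ (w : W) (φ ψ : Form A), w ∈ psem (1/2 : ℝ) M (Form.or φ ψ) ↔
    (w ∈ psem (1/2 : ℝ) M φ ∨ w ∈ psem (1/2 : ℝ) M ψ) := fun w => (psem_BH (1/2) M w).or
  have Bd : ∀ (w : W) (φ : Form A), w ∈ psem (1/2 : ℝ) M (Form.B φ) ↔
    1/2 < M.Pw w (psem (1/2 : ℝ) M φ) := fun w φ => Iff.rfl
  have compl : ∀ (w : W) (φ : Form A), M.Pw w (psem (1/2 : ℝ) M (Form.neg φ)) =
      1 - M.Pw w (psem (1/2 : ℝ) M φ) := by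
    intro w φ
    obtain ⟨q, h0, h1, h2, h3⟩ := M.Pw_weights w
    have h2' : M.Pw w (psem (1/2 : ℝ) M φ) + M.Pw w (psem (1/2 : ℝ) M (Form.neg φ)) = ∑ v, q v := by
      rw [h3, h3, ← Finset.sum_add_distrib]
      refine Finset.sum_congr rfl fun v _ => ?_
      by_cases hv : v ∈ psem (1/2 : ℝ) M φ
      · rw [if_pos hv, if_neg (by rw [Ng]; simpa using hv)]; ring
      · rw [if_neg hv, if_pos (by rw [Ng]; exact hv)]; ring
    linarith
  have mono : ∀ (w : W) (φ ψ : Form A),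
      (∀ v, M.R w v → v ∈ psem (1/2 : ℝ) M φ → v ∈ psem (1/2 : ℝ) M ψ) →
      M.Pw w (psem (1/2 : ℝ) M φ) ≤ M.Pw w (psem (1/2 : ℝ) M ψ) := by
    intro w φ ψ H
    obtain ⟨q, h0, h1, h2, h3⟩ := M.Pw_weights w
    rw [h3, h3]
    refine Finset.sum_le_sum fun v _ => ?_
    by_cases hR : M.R w v
    · by_cases hv : v ∈ psem (1/2 : ℝ) M φ
      · rw [if_pos hv, if_pos (H v hR hv)]
      · rw [if_neg hv]
        split_ifs
        · exact h0 v
        · exact le_rfl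
    · have : q v = 0 := by
        by_contra hc
        exact hR ((h1 v).2 (lt_of_le_of_ne (h0 v) (Ne.symm hc)))
      simp [this]
  have Ptop : ∀ w, M.Pw w (psem (1/2 : ℝ) M Form.top) = 1 := by
    intro w
    obtain ⟨q, h0, h1, h2, h3⟩ := M.Pw_weights w
    rw [h3, ← h2]
    simp [psem]
  induction h with
  | taut h => exact fun w => (psem_BH _ M w).taut h
  | kdist φ ψ =>
    intro w
    simp only [I, psem_K]
    exact fun h1 h2 v hv => h1 v hv (h2 v hv)
  | kt φ =>
    intro w
    simp only [I, psem_K]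
    exact fun h => h w (M.equiv.refl w)
  | k4 φ =>
    intro w
    simp only [I, psem_K]
    exact fun h v hv u hu => h u (M.equiv.trans hv hu)
  | k5 φ =>
    intro w
    simp only [I, Ng, psem_K]
    exact fun h v hv h2 => h fun u hu => h2 u (M.equiv.trans (M.equiv.symm hv) hu)
  | bf =>
    intro w
    rw [Ng, Bd, Form.bot, compl, Ptop]
    norm_num
  | bn =>
    intro w
    rw [Bd, Ptop]
    norm_num
  | ap φ =>
    intro w
    simp only [I, psem_K]
    exact fun h v hv => (psem_BR _ M hv φ).1 h
  | an φ =>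
    intro w
    simp only [I, Ng, psem_K]
    exact fun h v hv h2 => h ((psem_BR _ M hv φ).2 h2)
  | kbm φ ψ =>
    intro w
    simp only [I, psem_K, Bd]
    exact fun h h2 => lt_of_lt_of_le h2 (mono w φ ψ h)
  | dax φ =>
    intro w
    rw [I, Ng, Bd, Bd, compl]
    intro h
    linarith
  | scax φ ψ =>
    intro w
    rw [I, An, Ng, Ng, psem_K, Bd, Bd, compl]
    simp only [Ng, An]
    rintro ⟨h1, h2⟩
    push Not at h2
    obtain ⟨u, hu, huφ, huψ⟩ := h2
    obtain ⟨q, h0, hq1, -, h3⟩ := M.Pw_weights w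
    have : M.Pw w (psem (1/2 : ℝ) M φ) < M.Pw w (psem (1/2 : ℝ) M (Form.or φ ψ)) := by
      rw [h3, h3]
      refine Finset.sum_lt_sum (fun v _ => ?_) ⟨u, Finset.mem_univ _, ?_⟩
      · by_cases hv : v ∈ psem (1/2 : ℝ) M φ
        · rw [if_pos hv, if_pos (by rw [Or']; exact Or.inl hv)]
        · rw [if_neg hv]
          split_ifs
          · exact h0 v
          · exact le_rfl
      · rw [if_neg huφ, if_pos (by rw [Or']; exact Or.inr huψ)]
        exact (hq1 u).1 hu
    linarith
  | scott m φ ψ =>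
    intro w
    rw [I, An, An, (psem_BH _ M w).bigOr, (psem_BH _ M w).bigAnd, segI, psem_K]
    rintro ⟨h1, h2, h3⟩
    have h1' := fun v hv => ((psem_BH _ M v).segI φ ψ).1 (h1 v hv)
    rw [Bd] at h2
    have h3' : ∀ i : Fin m, 1/2 ≤ M.Pw w (psem (1/2 : ℝ) M (φ i.succ)) := by
      intro i
      have := h3 _ (List.mem_ofFn.2 ⟨i, rfl⟩)
      rw [Ng, Bd, compl] at this
      linarith
    by_contra hcon
    have hψ : ∀ i, M.Pw w (psem (1/2 : ℝ) M (ψ i)) ≤ 1/2 := by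
      intro i
      by_contra hi
      push Not at hi
      exact hcon ⟨_, List.mem_ofFn.2 ⟨i, rfl⟩, hi⟩
    have hle : ∑ i, M.Pw w (psem (1/2 : ℝ) M (φ i)) ≤ ∑ i, M.Pw w (psem (1/2 : ℝ) M (ψ i)) := by
      obtain ⟨q, h0, hq1, -, hq3⟩ := M.Pw_weights w
      simp only [hq3]
      rw [Finset.sum_comm, Finset.sum_comm (s := (Finset.univ : Finset (Fin (m + 1))))]
      refine Finset.sum_le_sum fun v _ => ?_
      rw [← Finset.sum_filter, ← Finset.sum_filter, Finset.sum_const, Finset.sum_const]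
      by_cases hR : M.R w v
      · have := h1' v hR
        rw [nsmul_eq_mul, nsmul_eq_mul]
        exact mul_le_mul_of_nonneg_right (by exact_mod_cast this) (h0 v)
      · have : q v = 0 := by
          by_contra hc
          exact hR ((hq1 v).2 (lt_of_le_of_ne (h0 v) (Ne.symm hc)))
        simp [this]
    have hU : ∑ i, M.Pw w (psem (1/2 : ℝ) M (ψ i)) ≤ ∑ i : Fin (m + 1), (1/2 : ℝ) :=
      Finset.sum_le_sum fun i _ => hψ i
    have hL : ∑ i : Fin (m + 1), (1/2 : ℝ) < ∑ i, M.Pw w (psem (1/2 : ℝ) M (φ i)) := by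
      rw [Fin.sum_univ_succ, Fin.sum_univ_succ]
      exact add_lt_add_of_lt_of_le h2 (Finset.sum_le_sum fun i _ => h3' i)
    linarith
  | mp _ _ ih1 ih2 => exact fun w => (I w _ _).1 (ih1 w) (ih2 w)
  | nec _ ih =>
    intro w
    rw [psem_K]
    exact fun v _ => ih v

/-! ### Maximal consistent sets -/

/-- Derivability from a set of hypotheses. -/
inductive Der {A : Type} (S : Set (Form A)) : Form A → Prop where
  | hyp {φ : Form A} : φ ∈ S → Der S φ
  | thm {φ : Form A} : KBeq φ → Der S φ
  | mp {φ ψ : Form A} : Der S (Form.imp φ ψ) → Der S φ → Der S ψ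

theorem Der.mono {A : Type} {S T : Set (Form A)} (h : S ⊆ T) {φ : Form A} (d : Der S φ) :
    Der T φ := by
  induction d with
  | hyp h' => exact Der.hyp (h h')
  | thm h' => exact Der.thm h'
  | mp _ _ i1 i2 => exact Der.mp i1 i2

theorem Der.deduction {A : Type} {S : Set (Form A)} {χ ψ : Form A} (d : Der (insert χ S) ψ) :
    Der S (Form.imp χ ψ) := by
  induction d with
  | @hyp φ h =>
    rcases h with rfl | h
    · exact Der.thm (KBeq.taut (by intro v; simp [evalb, Form.imp]))
    · refine Der.mp (Der.thm (KBeq.taut (φ := Form.imp φ (Form.imp χ φ)) ?_)) (Der.hyp h)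
      intro v
      simp [evalb, Form.imp]
      cases evalb v φ <;> simp
  | @thm φ h =>
    refine Der.mp (Der.thm (KBeq.taut (φ := Form.imp φ (Form.imp χ φ)) ?_)) (Der.thm h)
    intro v
    simp [evalb, Form.imp]
    cases evalb v φ <;> simp
  | @mp φ ψ _ _ i1 i2 =>
    refine Der.mp (Der.mp (Der.thm (KBeq.taut (φ := Form.imp (Form.imp χ (Form.imp φ ψ))
      (Form.imp (Form.imp χ φ) (Form.imp χ ψ))) ?_)) i1) i2
    intro v
    simp [evalb, Form.imp]
    cases evalb v χ <;> cases evalb v φ <;> cases evalb v ψ <;> simp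

theorem Der.empty {A : Type} {φ : Form A} (d : Der ∅ φ) : KBeq φ := by
  induction d with
  | hyp h => exact absurd h (Set.notMem_empty _)
  | thm h => exact h
  | mp _ _ i1 i2 => exact KBeq.mp i1 i2

theorem Der.chain {A : Type} {c : Set (Set (Form A))} (hc : IsChain (· ⊆ ·) c)
    (hne : c.Nonempty) {φ : Form A} (d : Der (⋃₀ c) φ) : ∃ S ∈ c, Der S φ := by
  induction d with
  | hyp h =>
    obtain ⟨S, hS, h⟩ := h
    exact ⟨S, hS, Der.hyp h⟩
  | thm h =>
    obtain ⟨S, hS⟩ := hne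
    exact ⟨S, hS, Der.thm h⟩
  | mp _ _ i1 i2 =>
    obtain ⟨S, hS, d1⟩ := i1
    obtain ⟨T, hT, d2⟩ := i2
    rcases hc.total hS hT with h | h
    · exact ⟨T, hT, Der.mp (d1.mono h) d2⟩
    · exact ⟨S, hS, Der.mp d1 (d2.mono h)⟩

/-- Maximal consistent sets. -/
structure MCS {A : Type} (S : Set (Form A)) : Prop where
  thm : ∀ {φ : Form A}, KBeq φ → φ ∈ S
  mp : ∀ {φ ψ : Form A}, Form.imp φ ψ ∈ S → φ ∈ S → ψ ∈ S
  neg : ∀ φ : Form A, Form.neg φ ∈ S ↔ φ ∉ S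

theorem lindenbaum {A : Type} {S : Set (Form A)} {φ : Form A} (h : ¬ Der S φ) :
    ∃ T, MCS T ∧ S ⊆ T ∧ φ ∉ T := by
  obtain ⟨T, hST, hT⟩ := zorn_subset_nonempty {T : Set (Form A) | ¬ Der T φ} (by
    intro c hc1 hc2 hne
    refine ⟨⋃₀ c, ?_, fun s hs => Set.subset_sUnion_of_mem hs⟩
    intro d
    obtain ⟨U, hU, d'⟩ := Der.chain hc2 hne d
    exact hc1 hU d') S h
  have hTn : ¬ Der T φ := hT.prop
  have hmax : ∀ χ, χ ∉ T → Der T (Form.imp χ φ) := by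
    intro χ hχ
    refine Der.deduction ?_
    by_contra hcon
    exact hχ (hT.le_of_ge (y := insert χ T) hcon (Set.subset_insert _ _) (Set.mem_insert _ _))
  have hcl : ∀ χ, Der T χ → χ ∈ T := by
    intro χ d
    by_contra hχ
    exact hTn (Der.mp (hmax χ hχ) d)
  refine ⟨T, ⟨fun h => hcl _ (Der.thm h), fun h1 h2 => hcl _ (Der.mp (Der.hyp h1) (Der.hyp h2)),
    fun χ => ⟨fun h1 h2 => hTn ?_, fun h1 => ?_⟩⟩, hST, fun h => hTn (Der.hyp h)⟩
  · refine Der.mp (Der.mp (Der.thm (KBeq.taut (φ := Form.imp (Form.neg χ) (Form.imp χ φ)) ?_))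
      (Der.hyp h1)) (Der.hyp h2)
    intro v
    simp [evalb, Form.imp]
    cases evalb v χ <;> simp
  · by_contra h2
    refine hTn (Der.mp (Der.mp (Der.thm (KBeq.taut (φ := Form.imp (Form.imp χ φ)
      (Form.imp (Form.imp (Form.neg χ) φ) φ)) ?_)) (hmax _ h1)) (hmax _ h2))
    intro v
    simp [evalb, Form.imp]
    cases evalb v χ <;> cases evalb v φ <;> simp

theorem MCS.BH {A : Type} {S : Set (Form A)} (h : MCS S) : BH (fun φ => φ ∈ S) where
  top := h.thm (KBeq.taut (by intro v; simp [evalb]))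
  neg := h.neg
  and := by
    intro φ ψ
    refine ⟨fun H => ⟨h.mp (h.thm (KBeq.taut ?_)) H, h.mp (h.thm (KBeq.taut ?_)) H⟩,
      fun H => h.mp (h.mp (h.thm (KBeq.taut ?_)) H.1) H.2⟩ <;>
    · intro v
      simp [evalb, Form.imp]
      cases evalb v φ <;> cases evalb v ψ <;> simp

/-- The worlds of the canonical model equivalent to `S`. -/
def Cls {A : Type} (S : Set (Form A)) : Type :=
  {T : Set (Form A) // MCS T ∧ ∀ χ, Form.K χ ∈ T ↔ Form.K χ ∈ S}

theorem mcs_K {A : Type} {S : Set (Form A)} (h : MCS S) (ψ : Form A) :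
    Form.K ψ ∈ S ↔ ∀ T : Cls S, ψ ∈ T.1 := by
  constructor
  · intro hK T
    exact T.2.1.mp (T.2.1.thm (KBeq.kt ψ)) ((T.2.2 ψ).2 hK)
  · intro H
    by_contra hK
    let U : Set (Form A) := {x | x ∈ S ∧ ((∃ χ, x = Form.K χ) ∨ ∃ χ, x = Form.neg (Form.K χ))}
    have key : ∀ χ, Der U χ → Form.K χ ∈ S := by
      intro χ d
      induction d with
      | hyp hx =>
        obtain ⟨hx, ⟨χ, rfl⟩ | ⟨χ, rfl⟩⟩ := hx
        · exact h.mp (h.thm (KBeq.k4 _)) hx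
        · exact h.mp (h.thm (KBeq.k5 _)) hx
      | thm hx => exact h.thm (KBeq.nec hx)
      | mp _ _ i1 i2 => exact h.mp (h.mp (h.thm (KBeq.kdist _ _)) i1) i2
    obtain ⟨T, hT, hUT, hψ⟩ := lindenbaum (S := U) (φ := ψ) (fun d => hK (key _ d))
    refine hψ (H ⟨T, hT, fun χ => ⟨fun h1 => ?_, fun h1 => hUT ⟨h1, Or.inl ⟨_, rfl⟩⟩⟩⟩)
    by_contra h2
    have : Form.neg (Form.K χ) ∈ T := hUT ⟨(h.neg _).2 h2, Or.inr ⟨_, rfl⟩⟩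
    exact (hT.neg _).1 this h1

theorem mcs_B {A : Type} {S : Set (Form A)} (h : MCS S) (ψ : Form A) (T : Cls S) :
    Form.B ψ ∈ T.1 ↔ Form.B ψ ∈ S := by
  constructor
  · intro h1
    by_contra h2
    have h3 := h.mp (h.thm (KBeq.an ψ)) ((h.neg _).2 h2)
    exact (T.2.1.neg _).1 ((mcs_K h _).1 h3 T) h1
  · intro h1
    exact (mcs_K h _).1 (h.mp (h.thm (KBeq.ap ψ)) h1) T

theorem mcs_Bmono {A : Type} {S : Set (Form A)} (h : MCS S) {ψ χ : Form A}
    (H : ∀ T : Cls S, ψ ∈ T.1 → χ ∈ T.1) (hB : Form.B ψ ∈ S) : Form.B χ ∈ S := by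
  refine h.mp (h.mp (h.thm (KBeq.kbm ψ χ)) ((mcs_K h _).2 fun T => ?_)) hB
  exact (T.2.1.BH.imp _ _).2 (H T)

/-- The list of subformulas. -/
def subs {A : Type} : Form A → List (Form A)
  | Form.top => [Form.top]
  | Form.atom p => [Form.atom p]
  | Form.neg φ => Form.neg φ :: subs φ
  | Form.and φ ψ => Form.and φ ψ :: (subs φ ++ subs ψ)
  | Form.K φ => Form.K φ :: subs φ
  | Form.B φ => Form.B φ :: subs φ

theorem mem_subs {A : Type} (φ : Form A) : φ ∈ subs φ := by
  cases φ <;> simp [subs]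

/-- The type of a world relative to a list of formulas. -/
def typ {A : Type} {S : Set (Form A)} (L : List (Form A)) (T : Cls S) : {ψ // ψ ∈ L} → Prop :=
  fun ψ => ψ.1 ∈ T.1

/-- The worlds of the finite model. -/
def Wld {A : Type} (S : Set (Form A)) (L : List (Form A)) : Type :=
  {t : {ψ // ψ ∈ L} → Prop // ∃ T : Cls S, typ L T = t}

/-- The world of the finite model given by a maximal consistent set. -/
def toW {A : Type} {S : Set (Form A)} (L : List (Form A)) (T : Cls S) : Wld S L :=
  ⟨typ L T, T, rfl⟩

theorem Wld_finite {A : Type} (S : Set (Form A)) (L : List (Form A)) : Finite (Wld S L) := by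
  have : Finite {ψ // ψ ∈ L} := List.finite_toSet L
  unfold Wld
  infer_instance

theorem definable {A : Type} (S : Set (Form A)) (L : List (Form A)) (X : Set (Wld S L)) :
    ∃ χ : Form A, ∀ T : Cls S, χ ∈ T.1 ↔ toW L T ∈ X := by
  have hs : ∀ t : Wld S L, ∃ χ : Form A, ∀ T : Cls S, χ ∈ T.1 ↔ toW L T = t := by
    intro t
    refine ⟨bigAnd (L.attach.map fun ψ => if t.1 ψ then ψ.1 else Form.neg ψ.1), fun T => ?_⟩
    rw [T.2.1.BH.bigAnd]
    constructor
    · intro H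
      refine Subtype.ext (funext fun ψ => propext ?_)
      have := H _ (List.mem_map.2 ⟨ψ, List.mem_attach _ _, rfl⟩)
      split_ifs at this with h
      · exact ⟨fun _ => h, fun _ => this⟩
      · rw [T.2.1.neg] at this
        exact ⟨fun h' => absurd h' this, fun h' => absurd h' h⟩
    · rintro rfl x hx
      obtain ⟨ψ, -, rfl⟩ := List.mem_map.1 hx
      split_ifs with h
      · exact h
      · exact (T.2.1.neg _).2 h
  choose f hf using hs
  have := Wld_finite S L
  have := Fintype.ofFinite (Wld S L)
  refine ⟨bigOr ((Finset.univ.filter fun t => t ∈ X).toList.map f), fun T => ?_⟩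
  rw [T.2.1.BH.bigOr]
  constructor
  · rintro ⟨x, hx, hT⟩
    obtain ⟨t, ht, rfl⟩ := List.mem_map.1 hx
    rw [hf] at hT
    rw [hT]
    simpa using ht
  · intro H
    exact ⟨_, List.mem_map.2 ⟨toW L T, by simpa using H, rfl⟩, (hf _ _).2 rfl⟩

/-- The uniform-class model built from positive weights summing to one. -/
noncomputable def mkModel {W A : Type} [Fintype W] [Nonempty W] (p : W → ℝ) (hp : ∀ w, 0 < p w)
    (h1 : ∑ w, p w = 1) (V : W → Set A) : EPM W A where
  finite := inferInstance
  nonempty := inferInstance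
  R := fun _ _ => True
  equiv := ⟨fun _ => trivial, fun _ => trivial, fun _ _ => trivial⟩
  V := V
  P := fun X => ∑ w, if w ∈ X then p w else 0
  nonneg := fun X => Finset.sum_nonneg fun w _ => by
    split_ifs
    · exact (hp w).le
    · exact le_rfl
  le_one := fun X => by
    rw [← h1]
    refine Finset.sum_le_sum fun w _ => ?_
    split_ifs
    · exact le_rfl
    · exact (hp w).le
  norm := by simpa using h1
  add := fun X Y h => by
    rw [← Finset.sum_add_distrib]
    refine Finset.sum_congr rfl fun w _ => ?_
    by_cases hX : w ∈ X <;> by_cases hY : w ∈ Y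
    · have : w ∈ X ∩ Y := ⟨hX, hY⟩
      rw [h] at this
      exact absurd this (Set.notMem_empty _)
    all_goals simp [hX, hY]
  full := fun w => by simpa using hp w

theorem mkModel_Pw {W A : Type} [Fintype W] [Nonempty W] (p : W → ℝ) (hp : ∀ w, 0 < p w)
    (h1 : ∑ w, p w = 1) (V : W → Set A) (w : W) (X : Set W) :
    (mkModel p hp h1 V).Pw w X = ∑ w, if w ∈ X then p w else 0 := by
  have : (mkModel p hp h1 V).cl w = Set.univ := by
    ext v
    exact ⟨fun _ => trivial, fun _ => trivial⟩
  unfold EPM.Pw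
  rw [this, Set.inter_univ, (mkModel p hp h1 V).norm, div_one]
  rfl

theorem completeness {A : Type} {φ : Form A} (hφ : ¬ KBeq φ) :
    ∃ (W : Type) (M : EPM W A) (w : W), w ∉ psem (1/2 : ℝ) M φ := by
  obtain ⟨S, hS, -, hφS⟩ := lindenbaum (S := ∅) (φ := φ) (fun d => hφ d.empty)
  let S0 : Cls S := ⟨S, hS, fun _ => Iff.rfl⟩
  let L := subs φ
  have := Wld_finite S L
  have : Fintype (Wld S L) := Fintype.ofFinite _
  have : Nonempty (Wld S L) := ⟨toW L S0⟩
  have surj : ∀ w : Wld S L, ∃ T : Cls S, toW L T = w := by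
    rintro ⟨t, T, rfl⟩
    exact ⟨T, rfl⟩
  choose χ hχ using definable S L
  let N : Set (Wld S L) → Prop := fun X => Form.B (χ X) ∈ S
  have hN : ∀ (X : Set (Wld S L)) (ψ : Form A), (∀ T : Cls S, ψ ∈ T.1 ↔ toW L T ∈ X) →
      (N X ↔ Form.B ψ ∈ S) := by
    intro X ψ H
    exact ⟨mcs_Bmono hS fun T hT => (H T).2 ((hχ X T).1 hT),
      mcs_Bmono hS fun T hT => (hχ X T).2 ((H T).1 hT)⟩
  have hNc : ∀ X : Set (Wld S L), N Xᶜ ↔ Form.B (Form.neg (χ X)) ∈ S := by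
    intro X
    refine hN _ _ fun T => ?_
    rw [T.2.1.neg, hχ]
    rfl
  obtain ⟨p, hp, hpN⟩ := exists_prob N
    (by
      intro X hX
      rw [hNc, ← hS.neg]
      exact hS.mp (hS.thm (KBeq.dax _)) hX)
    (by
      intro X x hX hx
      rw [hNc] at hX
      have hX' : N (insert x X) ↔ Form.B (Form.or (χ X) (χ {x})) ∈ S := by
        refine hN _ _ fun T => ?_
        rw [T.2.1.BH.or, hχ, hχ]
        simp [or_comm]
      rw [hX']
      refine hS.mp (hS.thm (KBeq.scax (χ X) (χ {x}))) ?_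
      rw [hS.BH.and, hS.neg, hS.neg, mcs_K hS]
      refine ⟨hX, fun H => ?_⟩
      obtain ⟨T, hT⟩ := surj x
      have := H T
      rw [T.2.1.neg, T.2.1.BH.and, T.2.1.neg, hχ, hχ, hT] at this
      exact this ⟨hx, rfl⟩)
    (by
      intro m X Y hXY h0 hi
      have := hS.mp (hS.thm (KBeq.scott m (fun i => χ (X i)) (fun i => χ (Y i)))) (by
        rw [hS.BH.and, hS.BH.and, hS.BH.bigAnd, segI, mcs_K hS]
        refine ⟨fun T => ?_, h0, fun x hx => ?_⟩
        · rw [T.2.1.BH.segI]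
          simp only [hχ]
          exact hXY (toW L T)
        · obtain ⟨i, rfl⟩ := List.mem_ofFn.1 hx
          rw [hS.neg, ← hNc]
          exact hi i)
      rw [hS.BH.bigOr] at this
      obtain ⟨x, hx, hT⟩ := this
      obtain ⟨i, rfl⟩ := List.mem_ofFn.1 hx
      exact ⟨i, hT⟩)
  let s : ℚ := ∑ w, p w
  have hs : 0 < s := Finset.sum_pos (fun w _ => hp w) Finset.univ_nonempty
  have hsR : (0 : ℝ) < (s : ℝ) := by exact_mod_cast hs
  let q : Wld S L → ℝ := fun w => ((p w / s : ℚ) : ℝ)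
  have hq : ∀ w, 0 < q w := fun w => by
    have : 0 < p w / s := div_pos (hp w) hs
    exact Rat.cast_pos.2 this
  have hq1 : ∑ w, q w = 1 := by
    have : ∑ w, p w / s = 1 := by
      rw [← Finset.sum_div]
      exact div_self hs.ne'
    simp only [q]
    exact_mod_cast this
  have hqN : ∀ X, N X ↔ (1/2 : ℝ) < ∑ w, if w ∈ X then q w else 0 := by
    intro X
    rw [hpN]
    have e1 : ((∑ w, (sgv X w : ℚ) * p w : ℚ) : ℝ) =
        s * (2 * (∑ w, if w ∈ X then q w else 0) - ∑ w, q w) := by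
      rw [Finset.mul_sum, ← Finset.sum_sub_distrib, Finset.mul_sum]
      push_cast
      refine Finset.sum_congr rfl fun w _ => ?_
      have : (s : ℝ) * q w = p w := by
        simp only [q]
        push_cast
        field_simp
      by_cases hw : w ∈ X
      · simp only [sgv, if_pos hw]
        push_cast
        rw [← this]
        ring
      · simp only [sgv, if_neg hw]
        push_cast
        rw [← this]
        ring
    rw [← Rat.cast_pos (K := ℝ), e1, hq1, mul_pos_iff_of_pos_left hsR]
    constructor <;> intro h <;> linarith
  let M : EPM (Wld S L) A := mkModel q hq hq1
    (fun w => {a | ∃ h : Form.atom a ∈ L, w.1 ⟨Form.atom a, h⟩})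
  have truth : ∀ ψ : Form A, (∀ x ∈ subs ψ, x ∈ L) →
      ∀ T : Cls S, ψ ∈ T.1 ↔ toW L T ∈ psem (1/2 : ℝ) M ψ := by
    intro ψ
    induction ψ with
    | top =>
      intro _ T
      simp only [psem, Set.mem_univ, iff_true]
      exact T.2.1.BH.top
    | atom a =>
      intro h T
      have ha : Form.atom a ∈ L := h _ (mem_subs _)
      exact ⟨fun hh => ⟨ha, hh⟩, fun ⟨_, hh⟩ => hh⟩
    | neg ψ ih =>
      intro h T
      rw [T.2.1.neg, (psem_BH _ M _).neg, ih fun x hx => h x (by simp [subs, hx])]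
    | and ψ ξ ih1 ih2 =>
      intro h T
      rw [T.2.1.BH.and, (psem_BH _ M _).and, ih1 fun x hx => h x (by simp [subs, hx]),
        ih2 fun x hx => h x (by simp [subs, hx])]
    | K ψ ih =>
      intro h T
      have ih' := ih fun x hx => h x (by simp [subs, hx])
      rw [psem_K, T.2.2, mcs_K hS]
      constructor
      · intro H v _
        obtain ⟨T', rfl⟩ := surj v
        exact (ih' T').1 (H T')
      · intro H T'
        exact (ih' T').2 (H _ trivial)
    | B ψ ih =>
      intro h T
      have ih' := ih fun x hx => h x (by simp [subs, hx])
      rw [mcs_B hS, ← hN _ ψ ih', hqN]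
      show _ ↔ (1/2 : ℝ) < M.Pw _ _
      rw [mkModel_Pw]
  exact ⟨_, M, toW L S0, fun h => hφS ((truth φ (fun _ hx => hx) S0).2 h)⟩

/-- `KBeq` is sound and complete for threshold `1/2` with respect to the class of
epistemic probability models. -/
theorem KBeq_probability_soundness_completeness {A : Type} (φ : Form A) :
    KBeq φ ↔ ∀ (W : Type) (M : EPM W A) (w : W), w ∈ psem (1/2 : ℝ) M φ := by
  constructor
  · exact fun h => soundness h
  · intro h
    by_contra hn
    obtain ⟨W, M, w, hw⟩ := completeness hn
    exact hw (h W M w)
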